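/- arXiv:1805.02886 — 2 statements merged into one kernel-verified Lean document; each statement's English description precedes it below -/
import Mathlib

section
/- For every integer r ≥ 2, the complete tripartite graph K(1,2,r) has local antimagic chromatic number equal to 3. -/
open scoped BigOperators

/-- The induced vertex sum: sum of labels of edges incident to `v`. -/
noncomputable def vertexSum {V : Type*} (G : SimpleGraph V) (f : Sym2 V → ℕ) (v : V) : ℕ :=
  ∑ᶠ e ∈ G.incidenceSet v, f e

/-- `f` is a local antimagic labeling of `G`: a bijection from the edge set onto
`{1, …, |E(G)|}` such that adjacent vertices get distinct induced sums. -/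
def IsLocalAntimagic {V : Type*} (G : SimpleGraph V) (f : Sym2 V → ℕ) : Prop :=
  Set.BijOn f G.edgeSet (Set.Icc 1 G.edgeSet.ncard) ∧
  ∀ u v, G.Adj u v → vertexSum G f u ≠ vertexSum G f v

/-- Number of distinct induced vertex labels of the labeling `f`. -/
noncomputable def colorCount {V : Type*} (G : SimpleGraph V) (f : Sym2 V → ℕ) : ℕ :=
  (Set.range (vertexSum G f)).ncard

/-- The local antimagic chromatic number. -/
noncomputable def chiLA {V : Type*} (G : SimpleGraph V) : ℕ :=
  sInf { n | ∃ f, IsLocalAntimagic G f ∧ colorCount G f = n }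

/-- The join `G ∨ Oₙ` of `G` with the empty graph on `n` vertices. -/
def joinEmpty {V : Type*} (G : SimpleGraph V) (n : ℕ) : SimpleGraph (V ⊕ Fin n) :=
  SimpleGraph.fromRel (fun x y =>
    (∃ a b, x = Sum.inl a ∧ y = Sum.inl b ∧ G.Adj a b) ∨ (x.isLeft ∧ y.isRight))

/-!
A local antimagic labeling is in particular a proper coloring, and `K(1,2,r)` contains a triangle,
so at least three induced labels occur. For a labeling with exactly three, write the labels of the
edges between the parts of sizes `1` and `2` and the part of size `r` into a `3 × r` array whose
rows are the vertices of the first two parts. All columns must have the same sum, and the labels of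
the two remaining edges must compensate the difference of the sums of the last two rows.

Start from a `3 × (2m + 1)` array of the numbers `0, …, 6m + 2`, written in base `2m + 1`, in which
the leading digit depends only on the row and the last digits form a rectangle with constant column
sums. Permuting the entries within a column does not change its sum. Exchanging rows `1` and `2` in
a column changes the difference of their sums by one of two amounts, depending on which of two kinds
of `m` columns it belongs to, so the difference can be prescribed by the number of exchanges of each
kind. For `r = 2m + 1`, arrange that the difference is `1`, add `3` to every entry, and put the
labels `1` and `2` on the remaining edges. For `r = 2m`, arrange that the difference is `0`, delete
the column containing the entry `0`, and put its two other entries on the remaining edges.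
-/

section Isomorphism

variable {V W : Type*} {G : SimpleGraph V} {H : SimpleGraph W}

theorem vertexSum_eq_finsum_neighborSet (G : SimpleGraph V) (f : Sym2 V → ℕ) (v : V) :
    vertexSum G f v = ∑ᶠ u ∈ G.neighborSet v, f s(v, u) := by
  have incidenceSet_eq_image : G.incidenceSet v = (fun u ↦ s(v, u)) '' G.neighborSet v := by
    ext e
    constructor
    · rintro ⟨he, u, rfl⟩
      exact ⟨u, he, rfl⟩
    · rintro ⟨u, hu, rfl⟩
      exact ⟨hu, Sym2.mem_mk_left v u⟩
  rw [vertexSum, incidenceSet_eq_image,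
    finsum_mem_image (Function.Injective.injOn fun _ _ h ↦ Sym2.congr_right.1 h)]

theorem vertexSum_eq_sum [Fintype V] (G : SimpleGraph V) [DecidableRel G.Adj] (f : Sym2 V → ℕ)
    (v : V) : vertexSum G f v = ∑ u with G.Adj v u, f s(v, u) := by
  rw [vertexSum_eq_finsum_neighborSet, ← finsum_mem_coe_finset]
  simp only [Finset.coe_filter, Finset.mem_univ, true_and, SimpleGraph.neighborSet]

theorem vertexSum_comp_map (e : G ≃g H) (f : Sym2 W → ℕ) (v : V) :
    vertexSum G (f ∘ Sym2.map e) v = vertexSum H f (e v) := by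
  rw [vertexSum_eq_finsum_neighborSet, vertexSum_eq_finsum_neighborSet]
  refine finsum_mem_eq_of_bijOn e ⟨fun u hu ↦ e.map_adj_iff.2 hu, e.injective.injOn, ?_⟩
    fun _ _ ↦ rfl
  intro w hw
  exact ⟨e.symm w, by simpa using e.symm.map_adj_iff.2 hw, e.apply_symm_apply w⟩

theorem bijOn_map_edgeSet (e : G ≃g H) : Set.BijOn (Sym2.map e) G.edgeSet H.edgeSet := by
  refine ⟨fun s hs ↦ e.map_mem_edgeSet_iff.2 hs, (Sym2.map.injective e.injective).injOn, ?_⟩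
  intro s hs
  exact ⟨Sym2.map e.symm s, e.symm.map_mem_edgeSet_iff.2 hs, by simp [Sym2.map_map]⟩

theorem IsLocalAntimagic.comp_map (e : G ≃g H) {f : Sym2 W → ℕ} (hf : IsLocalAntimagic H f) :
    IsLocalAntimagic G (f ∘ Sym2.map e) := by
  refine ⟨?_, fun u v huv ↦ ?_⟩
  · have hcard : G.edgeSet.ncard = H.edgeSet.ncard := Set.ncard_congr' e.mapEdgeSet
    rw [hcard]
    exact hf.1.comp (bijOn_map_edgeSet e)
  · rw [vertexSum_comp_map, vertexSum_comp_map]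
    exact hf.2 _ _ (e.map_adj_iff.2 huv)

theorem colorCount_comp_map (e : G ≃g H) (f : Sym2 W → ℕ) :
    colorCount G (f ∘ Sym2.map e) = colorCount H f := by
  rw [colorCount, colorCount, funext (vertexSum_comp_map e f)]
  exact congrArg Set.ncard (e.surjective.range_comp (vertexSum H f))

theorem chiLA_congr (e : G ≃g H) : chiLA G = chiLA H := by
  refine congrArg sInf (Set.ext fun n ↦ ⟨?_, ?_⟩)
  · rintro ⟨f, hf, rfl⟩
    exact ⟨_, hf.comp_map e.symm, colorCount_comp_map e.symm f⟩
  · rintro ⟨f, hf, rfl⟩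
    exact ⟨_, hf.comp_map e, colorCount_comp_map e f⟩

theorem IsLocalAntimagic.chromaticNumber_le_colorCount [Finite V] {f : Sym2 V → ℕ}
    (hf : IsLocalAntimagic G f) : G.chromaticNumber ≤ colorCount G f := by
  have := Fintype.ofFinite (Set.range (vertexSum G f))
  let C : G.Coloring (Set.range (vertexSum G f)) :=
    SimpleGraph.Coloring.mk (fun v ↦ ⟨vertexSum G f v, v, rfl⟩)
      fun huv h ↦ hf.2 _ _ huv (congrArg Subtype.val h)
  rw [colorCount, ← Nat.card_coe_set_eq, Nat.card_eq_fintype_card]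
  exact C.colorable.chromaticNumber_le

theorem IsLocalAntimagic.chiLA_eq [Finite V] {f : Sym2 V → ℕ} {n : ℕ} (hf : IsLocalAntimagic G f)
    (hcount : colorCount G f ≤ n) (hn : n ≤ G.chromaticNumber) : chiLA G = n := by
  have mem : colorCount G f ∈ {m | ∃ g, IsLocalAntimagic G g ∧ colorCount G g = m} := ⟨f, hf, rfl⟩
  refine le_antisymm ((Nat.sInf_le mem).trans hcount) (le_csInf ⟨_, mem⟩ ?_)
  rintro _ ⟨g, hg, rfl⟩
  exact_mod_cast hn.trans hg.chromaticNumber_le_colorCount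

end Isomorphism

/-- The complete tripartite graph `K(1,2,|J|)`: the parts are `{inl 0}`, `{inl 1, inl 2}` and `J`.
Its edges join the three hubs `Fin 3` to the columns `J`, and `inl 0` to `inl 1` and `inl 2`. -/
def K12 (J : Type*) : SimpleGraph (Fin 3 ⊕ J) :=
  (⊤ : SimpleGraph (Fin 3)).comap (Sum.elim ![0, 1, 1] fun _ ↦ 2)

namespace K12

section Model

variable {J : Type*}

instance : DecidableRel (K12 J).Adj :=
  fun u v ↦ inferInstanceAs (Decidable (Sum.elim ![0, 1, 1] (fun _ ↦ 2) u ≠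
    Sum.elim (![0, 1, 1] : Fin 3 → Fin 3) (fun _ ↦ 2) v))

@[simp]
theorem adj_inl_inl (i k : Fin 3) :
    (K12 J).Adj (.inl i) (.inl k) ↔ ![(0 : Fin 3), 1, 1] i ≠ ![0, 1, 1] k :=
  Iff.rfl

@[simp]
theorem adj_inl_inr (k : Fin 3) (j : J) : (K12 J).Adj (.inl k) (.inr j) := by
  change ![(0 : Fin 3), 1, 1] k ≠ 2
  decide +revert

@[simp]
theorem adj_inr_inl (k : Fin 3) (j : J) : (K12 J).Adj (.inr j) (.inl k) :=
  (adj_inl_inr k j).symm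

@[simp]
theorem not_adj_inr_inr (i j : J) : ¬ (K12 J).Adj (.inr i) (.inr j) :=
  fun h ↦ h rfl

theorem three_le_chromaticNumber [Nonempty J] : 3 ≤ (K12 J).chromaticNumber := by
  classical
  obtain ⟨j⟩ := ‹Nonempty J›
  have isClique : (K12 J).IsClique ({.inl 0, .inl 1, .inr j} : Finset (Fin 3 ⊕ J)) := by
    simp [SimpleGraph.isClique_insert]
  simpa using isClique.card_le_chromaticNumber

/-- The vertices of `K(1,2,r)`, with the parts of sizes `1` and `2` merged into `Fin 3`. -/
def vertexEquiv (r : ℕ) : Fin 3 ⊕ Fin r ≃ Σ i : Fin 3, ![Fin 1, Fin 2, Fin r] i where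
  toFun
    | .inl 0 => ⟨0, (0 : Fin 1)⟩
    | .inl 1 => ⟨1, (0 : Fin 2)⟩
    | .inl 2 => ⟨1, (1 : Fin 2)⟩
    | .inr j => ⟨2, j⟩
  invFun
    | ⟨0, _⟩ => .inl 0
    | ⟨1, i⟩ => .inl (Fin.succ (i : Fin 2))
    | ⟨2, j⟩ => .inr j
  left_inv := by
    rintro (i | j)
    · fin_cases i <;> rfl
    · rfl
  right_inv := by
    rintro ⟨i, x⟩
    fin_cases i
    · exact congrArg (Sigma.mk 0) (Subsingleton.elim (α := Fin 1) _ _)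
    · revert x
      exact Fin.forall_fin_two.2 ⟨rfl, rfl⟩
    · rfl

/-- `K12 J` is the complete multipartite graph with parts of sizes `1`, `2` and `|J|`. -/
def isoCompleteMultipartite {r : ℕ} (e : J ≃ Fin r) :
    K12 J ≃g SimpleGraph.completeMultipartiteGraph ![Fin 1, Fin 2, Fin r] where
  toEquiv := (Equiv.sumCongr (Equiv.refl _) e).trans (vertexEquiv r)
  map_rel_iff' := by
    rintro (i | i) (j | j)
    · fin_cases i <;> fin_cases j <;> rfl
    · fin_cases i <;> rfl
    · fin_cases j <;> rfl
    · rfl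

theorem chiLA_completeMultipartite [Fintype J] {r : ℕ} (hr : Fintype.card J = r) :
    chiLA (SimpleGraph.completeMultipartiteGraph ![Fin 1, Fin 2, Fin r]) = chiLA (K12 J) :=
  (chiLA_congr (isoCompleteMultipartite (Fintype.equivFinOfCardEq hr))).symm

/-- The enumeration of the edges of `K12 J`. -/
def edge : (Fin 3 × J) ⊕ Fin 2 → Sym2 (Fin 3 ⊕ J)
  | .inl (k, j) => s(.inl k, .inr j)
  | .inr i => s(.inl 0, .inl i.succ)

theorem edge_injective : Function.Injective (edge (J := J)) := by
  rintro (⟨k, j⟩ | i) (⟨k', j'⟩ | i') h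
  · simpa [edge] using h
  · simp [edge] at h
  · simp [edge] at h
  · simpa [edge] using h

theorem range_edge : Set.range (edge (J := J)) = (K12 J).edgeSet := by
  ext e
  constructor
  · rintro ⟨⟨k, j⟩ | i, rfl⟩
    · exact adj_inl_inr k j
    · change (K12 J).Adj (.inl 0) (.inl i.succ)
      fin_cases i <;> simp
  · induction e with | _ u v
    rcases u with k | j <;> rcases v with k' | j' <;> intro h
    · rw [SimpleGraph.mem_edgeSet, adj_inl_inl] at h
      fin_cases k <;> fin_cases k' <;> first
        | exact absurd rfl h
        | exact ⟨.inr 0, rfl⟩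
        | exact ⟨.inr 1, rfl⟩
        | exact ⟨.inr 0, Sym2.eq_swap⟩
        | exact ⟨.inr 1, Sym2.eq_swap⟩
    · exact ⟨.inl (k, j'), rfl⟩
    · exact ⟨.inl (k', j), Sym2.eq_swap⟩
    · exact absurd h (not_adj_inr_inr j j')

theorem ncard_edgeSet [Fintype J] : (K12 J).edgeSet.ncard = 3 * Fintype.card J + 2 := by
  rw [← range_edge, Set.ncard_range_of_injective edge_injective]
  simp

/-- The edge labeling with label `M k j` on the edge from hub `k` to column `j` and label `a i` on
the edge from hub `0` to hub `i + 1`. -/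
noncomputable def labeling (M : Fin 3 → J → ℕ) (a : Fin 2 → ℕ) : Sym2 (Fin 3 ⊕ J) → ℕ :=
  Function.extend edge (Sum.elim (Function.uncurry M) a) 0

variable (M : Fin 3 → J → ℕ) (a : Fin 2 → ℕ)

theorem labeling_edge (e : (Fin 3 × J) ⊕ Fin 2) :
    labeling M a (edge e) = Sum.elim (Function.uncurry M) a e :=
  edge_injective.extend_apply _ _ e

@[simp]
theorem labeling_hub_column (k : Fin 3) (j : J) : labeling M a s(.inl k, .inr j) = M k j :=
  labeling_edge M a (.inl (k, j))

@[simp]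
theorem labeling_column_hub (k : Fin 3) (j : J) : labeling M a s(.inr j, .inl k) = M k j := by
  rw [Sym2.eq_swap, labeling_hub_column]

@[simp]
theorem labeling_hub_zero_succ (i : Fin 2) : labeling M a s(.inl 0, .inl i.succ) = a i :=
  labeling_edge M a (.inr i)

@[simp]
theorem labeling_hub_succ_zero (i : Fin 2) : labeling M a s(.inl i.succ, .inl 0) = a i := by
  rw [Sym2.eq_swap, labeling_hub_zero_succ]

theorem vertexSum_column (j : J) : vertexSum (K12 J) (labeling M a) (.inr j) = ∑ k, M k j := by
  have neighborSet_eq_range : (K12 J).neighborSet (.inr j) = Set.range .inl := by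
    ext (k | i) <;> simp
  rw [vertexSum_eq_finsum_neighborSet, neighborSet_eq_range, finsum_mem_range Sum.inl_injective,
    finsum_eq_sum_of_fintype]
  simp only [labeling_column_hub]

variable [Fintype J]

theorem vertexSum_hub_zero :
    vertexSum (K12 J) (labeling M a) (.inl 0) = ∑ j, M 0 j + ∑ i, a i := by
  rw [vertexSum_eq_sum, Finset.sum_filter, Fintype.sum_sum_type, Fin.sum_univ_succ]
  have adj (i : Fin 2) : (K12 J).Adj (.inl 0) (.inl i.succ) := by fin_cases i <;> simp
  simp [-adj_inl_inl, adj, add_comm]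

theorem vertexSum_hub_succ (i : Fin 2) :
    vertexSum (K12 J) (labeling M a) (.inl i.succ) = ∑ j, M i.succ j + a i := by
  rw [vertexSum_eq_sum, Finset.sum_filter, Fintype.sum_sum_type, Fin.sum_univ_succ]
  have adj_zero : (K12 J).Adj (.inl i.succ) (.inl 0) := by fin_cases i <;> simp
  have not_adj_succ (k : Fin 2) : ¬ (K12 J).Adj (.inl i.succ) (.inl k.succ) := by
    fin_cases i <;> fin_cases k <;> simp
  simp [-adj_inl_inl, adj_zero, not_adj_succ, add_comm]

/-- The conditions on an array `M` with one row per hub and one column per element of `J`, and on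
the two labels `a` of the edges between the hubs, under which `labeling M a` is a local antimagic
labeling with induced labels `s` on hubs `1` and `2`, `c` on all columns, and a third value on
hub `0`. -/
structure IsAntimagicArray (s c : ℕ) : Prop where
  injective : Function.Injective (Sum.elim (Function.uncurry M) a)
  mem_Icc : ∀ e, Sum.elim (Function.uncurry M) a e ∈ Finset.Icc 1 (3 * Fintype.card J + 2)
  sum_column : ∀ j, ∑ k, M k j = c
  sum_row : ∀ i : Fin 2, ∑ j, M i.succ j + a i = s
  ne_column : s ≠ c
  hub_ne_column : ∑ j, M 0 j + ∑ i, a i ≠ c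
  hub_ne : ∑ j, M 0 j + ∑ i, a i ≠ s

namespace IsAntimagicArray

variable {M a} {s c : ℕ}

theorem bijOn_labeling (h : IsAntimagicArray M a s c) :
    Set.BijOn (labeling M a) (K12 J).edgeSet (Set.Icc 1 (K12 J).edgeSet.ncard) := by
  have injOn : Set.InjOn (labeling M a) (K12 J).edgeSet := by
    rw [← range_edge]
    rintro _ ⟨e, rfl⟩ _ ⟨e', rfl⟩ hee'
    rw [labeling_edge, labeling_edge] at hee'
    rw [h.injective hee']
  have mapsTo : Set.MapsTo (labeling M a) (K12 J).edgeSet (Set.Icc 1 (K12 J).edgeSet.ncard) := by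
    rw [ncard_edgeSet, ← range_edge]
    rintro _ ⟨e, rfl⟩
    rw [labeling_edge]
    exact Finset.mem_Icc.1 (h.mem_Icc e)
  have image_eq := Set.eq_of_subset_of_ncard_le mapsTo.image_subset
    (by rw [injOn.ncard_image, ← Finset.coe_Icc, Set.ncard_coe_finset]; simp)
  exact image_eq ▸ injOn.bijOn_image

theorem vertexSum_hub (h : IsAntimagicArray M a s c) (k : Fin 3) :
    vertexSum (K12 J) (labeling M a) (.inl k) =
      ![∑ j, M 0 j + ∑ i, a i, s, s] k := by
  cases k using Fin.cases with
  | zero => exact vertexSum_hub_zero M a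
  | succ i =>
    rw [vertexSum_hub_succ, h.sum_row]
    fin_cases i <;> rfl

theorem isLocalAntimagic (h : IsAntimagicArray M a s c) :
    IsLocalAntimagic (K12 J) (labeling M a) := by
  have hub_ne_column (k : Fin 3) (j : J) : vertexSum (K12 J) (labeling M a) (.inl k) ≠
      vertexSum (K12 J) (labeling M a) (.inr j) := by
    rw [h.vertexSum_hub, vertexSum_column, h.sum_column]
    fin_cases k
    exacts [h.hub_ne_column, h.ne_column, h.ne_column]
  refine ⟨h.bijOn_labeling, ?_⟩
  rintro (k | j) (k' | j') hadj
  · rw [adj_inl_inl] at hadj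
    rw [h.vertexSum_hub, h.vertexSum_hub]
    fin_cases k <;> fin_cases k' <;> first
      | exact absurd rfl hadj
      | exact h.hub_ne
      | exact h.hub_ne.symm
  · exact hub_ne_column k j'
  · exact (hub_ne_column k' j).symm
  · exact absurd hadj (not_adj_inr_inr j j')

theorem colorCount_le_three (h : IsAntimagicArray M a s c) :
    colorCount (K12 J) (labeling M a) ≤ 3 := by
  have range_subset : Set.range (vertexSum (K12 J) (labeling M a)) ⊆
      ({∑ j, M 0 j + ∑ i, a i, s, c} : Finset ℕ) := by
    rintro _ ⟨k | j, rfl⟩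
    · rw [h.vertexSum_hub]
      fin_cases k <;> simp
    · simp [vertexSum_column, h.sum_column]
  calc colorCount (K12 J) (labeling M a)
    _ ≤ ({∑ j, M 0 j + ∑ i, a i, s, c} : Finset ℕ).card := by
      rw [← Set.ncard_coe_finset]
      exact Set.ncard_le_ncard range_subset (Finset.finite_toSet _)
    _ ≤ 3 := Finset.card_le_three

theorem chiLA_eq_three [Nonempty J] (h : IsAntimagicArray M a s c) : chiLA (K12 J) = 3 :=
  h.isLocalAntimagic.chiLA_eq h.colorCount_le_three three_le_chromaticNumber

end IsAntimagicArray

end Model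

section ColumnMagic

variable {J : Type*} [Fintype J] {N : Fin 3 → J → ℕ} {c : ℕ}

/-- `N` fills the three rows and `|J|` columns of an array with the numbers `0, …, 3|J| - 1`, each
used once, so that every column has sum `c`. -/
structure IsColumnMagic (N : Fin 3 → J → ℕ) (c : ℕ) : Prop where
  injective : Function.Injective (Function.uncurry N)
  lt : ∀ k j, N k j < 3 * Fintype.card J
  sum_column : ∀ j, ∑ k, N k j = c

namespace IsColumnMagic

theorem sum_rows (h : IsColumnMagic N c) : ∑ k, ∑ j, N k j = Fintype.card J * c := by
  rw [Finset.sum_comm]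
  simp only [h.sum_column, Finset.sum_const, Finset.card_univ, smul_eq_mul]

theorem permute (h : IsColumnMagic N c) (σ : J → Equiv.Perm (Fin 3)) :
    IsColumnMagic (fun k j ↦ N (σ j k) j) c where
  injective := by
    rintro ⟨k, j⟩ ⟨k', j'⟩ heq
    obtain ⟨hk, rfl⟩ := Prod.mk.inj (h.injective (a₁ := (σ j k, j)) (a₂ := (σ j' k', j')) heq)
    rw [(σ j).injective hk]
  lt k j := h.lt (σ j k) j
  sum_column j := (Equiv.sum_comp (σ j) fun k ↦ N k j).trans (h.sum_column j)

theorem isAntimagicArray_add_three (h : IsColumnMagic N c) {s : ℕ} (h₁ : ∑ j, N 1 j = s + 1)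
    (h₂ : ∑ j, N 2 j = s) (ne_column : s + 3 * Fintype.card J + 2 ≠ c + 9)
    (hub_ne_column : ∑ j, N 0 j + 3 * Fintype.card J + 3 ≠ c + 9)
    (hub_ne : ∑ j, N 0 j + 1 ≠ s) :
    IsAntimagicArray (fun k j ↦ N k j + 3) ![1, 2] (s + 3 * Fintype.card J + 2) (c + 9) := by
  have sum_row_add (k : Fin 3) : ∑ j, (N k j + 3) = ∑ j, N k j + 3 * Fintype.card J := by
    rw [Finset.sum_add_distrib, Finset.sum_const, Finset.card_univ, smul_eq_mul, mul_comm]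
  have sum_pair : ∑ i, (![1, 2] : Fin 2 → ℕ) i = 3 := rfl
  refine ⟨?_, ?_, fun j ↦ ?_, ?_, ne_column, ?_, ?_⟩
  · refine Function.Injective.sumElim ((add_left_injective 3).comp h.injective) (by decide) ?_
    rintro ⟨k, j⟩ i
    fin_cases i <;> simp
  · rintro (⟨k, j⟩ | i)
    · have := h.lt k j
      simp only [Sum.elim_inl, Function.uncurry_apply_pair, Finset.mem_Icc]
      omega
    · fin_cases i <;> simp
  · rw [Finset.sum_add_distrib, h.sum_column]
    rfl
  · refine Fin.forall_fin_two.2 ⟨?_, ?_⟩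
    · change ∑ j, (N 1 j + 3) + 1 = _
      rw [sum_row_add, h₁]
      ring
    · change ∑ j, (N 2 j + 3) + 2 = _
      rw [sum_row_add, h₂]
  · rwa [sum_row_add, sum_pair]
  · rw [sum_row_add, sum_pair]
    omega

theorem isAntimagicArray_ne [DecidableEq J] (h : IsColumnMagic N c) {j₀ : J} (h₀ : N 0 j₀ = 0)
    {s : ℕ} (h_rows : ∀ i : Fin 2, ∑ j, N i.succ j = s) (ne_column : s ≠ c)
    (hub_ne_column : ∑ j, N 0 j ≠ 0) (hub_ne : ∑ j, N 0 j + c ≠ s) :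
    IsAntimagicArray (fun k (j : {j // j ≠ j₀}) ↦ N k j) (fun i ↦ N i.succ j₀) s c := by
  have sum_hub : ∑ j : {j // j ≠ j₀}, N 0 j + ∑ i : Fin 2, N i.succ j₀ = ∑ j, N 0 j + c := by
    rw [Fintype.sum_eq_add_sum_subtype_ne (N 0) j₀, ← h.sum_column j₀,
      Fin.sum_univ_succ fun k ↦ N k j₀, h₀]
    ring
  have card_pos : 0 < Fintype.card J := Fintype.card_pos_iff.2 ⟨j₀⟩
  have card_ne : Fintype.card {j // j ≠ j₀} = Fintype.card J - 1 := by
    rw [Fintype.card_subtype_compl, Fintype.card_subtype_eq]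
  refine ⟨?_, ?_, fun j ↦ h.sum_column j, fun i ↦ ?_, ne_column, ?_, ?_⟩
  · refine Function.Injective.sumElim ?_ ?_ ?_
    · exact h.injective.comp (Function.injective_id.prodMap Subtype.val_injective)
    · exact h.injective.comp fun i i' hi ↦ Fin.succ_injective 2 (Prod.mk.inj hi).1
    · rintro ⟨k, j⟩ i heq
      exact j.2 (Prod.mk.inj (h.injective (a₁ := (k, j.1)) (a₂ := (i.succ, j₀)) heq)).2
  · have mem_Icc {k : Fin 3} {j : J} (hkj : (k, j) ≠ (0, j₀)) :
        N k j ∈ Finset.Icc 1 (3 * Fintype.card {j // j ≠ j₀} + 2) := by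
      have ne_zero : N k j ≠ 0 := h₀ ▸ h.injective.ne hkj
      have := h.lt k j
      rw [Finset.mem_Icc, card_ne]
      omega
    rintro (⟨k, j⟩ | i)
    · exact mem_Icc fun hkj ↦ j.2 (Prod.mk.inj hkj).2
    · exact mem_Icc fun hi ↦ Fin.succ_ne_zero i (Prod.mk.inj hi).1
  · rw [← h_rows i, Fintype.sum_eq_add_sum_subtype_ne (N i.succ) j₀, add_comm]
  · rw [sum_hub]
    omega
  · rwa [sum_hub]

end IsColumnMagic

end ColumnMagic

section Rectangle

variable {m : ℕ}

/-- The `2m + 1` columns of the rectangle: the residue in row `0` is `2k` in the `k`-th column of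
the first kind, `2k + 1` in the `k`-th column of the second kind, and `2m` in the last column. -/
abbrev Column (m : ℕ) : Type := Fin m ⊕ Fin m ⊕ Unit

theorem card_column : Fintype.card (Column m) = 2 * m + 1 := by
  simp only [Fintype.card_sum, Fintype.card_fin, Fintype.card_unit]
  ring

theorem card_column_ne (j₀ : Column m) : Fintype.card {j // j ≠ j₀} = 2 * m := by
  rw [Fintype.card_subtype_compl, Fintype.card_subtype_eq, card_column, Nat.add_sub_cancel]

/-- A `3 × (2m + 1)` rectangle in which every row is a permutation of `0, …, 2m` and every column
has sum `3m`. -/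
def residue (i : Fin 3) : Column m → ℕ
  | .inl k => ![2 * (k : ℕ), m - k, 2 * m - k] i
  | .inr (.inl k) => ![2 * (k : ℕ) + 1, 2 * m - k, m - 1 - k] i
  | .inr (.inr _) => ![2 * m, 0, m] i

theorem residue_lt (i : Fin 3) (j : Column m) : residue i j < 2 * m + 1 := by
  rcases j with k | k | _ <;> fin_cases i <;> simp [residue] <;> omega

theorem residue_injective (i : Fin 3) : Function.Injective (residue (m := m) i) := by
  rintro (k | k | _) (l | l | _) h <;> fin_cases i <;> simp [residue] at h ⊢ <;> omega

theorem sum_residue (j : Column m) : ∑ i, residue i j = 3 * m := by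
  rw [Fin.sum_univ_three]
  rcases j with k | k | _ <;> simp [residue] <;> omega

/-- The base-`(2m + 1)` number with leading digit `β i` and last digit `residue i j`. -/
def entry (β : Equiv.Perm (Fin 3)) (i : Fin 3) (j : Column m) : ℕ :=
  residue i j + (2 * m + 1) * β i

theorem isColumnMagic_entry (β : Equiv.Perm (Fin 3)) :
    IsColumnMagic (entry (m := m) β) (9 * m + 3) where
  injective := by
    rintro ⟨i, j⟩ ⟨i', j'⟩ h
    have entry_div (i : Fin 3) (j : Column m) : entry β i j / (2 * m + 1) = β i := by
      rw [entry, Nat.add_mul_div_left _ _ (Nat.succ_pos _), Nat.div_eq_of_lt (residue_lt i j),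
        zero_add]
    obtain rfl : i = i' := by
      apply β.injective
      rw [Fin.ext_iff, ← entry_div i j, ← entry_div i' j']
      exact congrArg (· / (2 * m + 1)) h
    exact congrArg (Prod.mk i) (residue_injective i (Nat.add_right_cancel h))
  lt i j := by
    have := residue_lt i j
    have : (β i : ℕ) ≤ 2 := by omega
    rw [card_column, entry]
    nlinarith
  sum_column j := by
    have sum_digits : ∑ i, (β i : ℕ) = 3 := Equiv.sum_comp β fun i ↦ (i : ℕ)
    simp only [entry, Finset.sum_add_distrib, sum_residue, ← Finset.mul_sum, sum_digits]
    ring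

/-- The permutation applied to the entries of each column: rows `1` and `2` are exchanged in all but
the first `p` columns of the first kind and the first `q` columns of the second kind, and rows `0`
and `2` in the last column. -/
def columnPerm (p q : ℕ) : Column m → Equiv.Perm (Fin 3)
  | .inl k => if k < p then 1 else Equiv.swap 1 2
  | .inr (.inl k) => if k < q then 1 else Equiv.swap 1 2
  | .inr (.inr _) => Equiv.swap 0 2

/-- The rectangle `entry β` with its columns rearranged by `columnPerm p q`. -/
def array (β : Equiv.Perm (Fin 3)) (p q : ℕ) (i : Fin 3) (j : Column m) : ℕ :=
  entry β (columnPerm p q j i) j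

variable {β : Equiv.Perm (Fin 3)} {p q : ℕ}

theorem isColumnMagic_array : IsColumnMagic (array (m := m) β p q) (9 * m + 3) :=
  (isColumnMagic_entry β).permute _

theorem array_zero_inl (hβ : β 0 = 0) (k : Fin m) : array β p q 0 (.inl k) = 2 * k := by
  simp only [array, columnPerm]
  split_ifs <;> simp [entry, residue, hβ, Equiv.swap_apply_of_ne_of_ne]

theorem array_zero_inr_inl (hβ : β 0 = 0) (k : Fin m) :
    array β p q 0 (.inr (.inl k)) = 2 * k + 1 := by
  simp only [array, columnPerm]
  split_ifs <;> simp [entry, residue, hβ, Equiv.swap_apply_of_ne_of_ne]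

theorem sum_even_add_sum_odd (m : ℕ) :
    ∑ k : Fin m, 2 * (k : ℕ) + ∑ k : Fin m, (2 * (k : ℕ) + 1) + m = 2 * m ^ 2 := by
  induction m with
  | zero => rfl
  | succ m ih =>
    rw [Fin.sum_univ_castSucc, Fin.sum_univ_castSucc]
    simp only [Fin.val_castSucc, Fin.val_last]
    linarith

theorem sum_array_zero (hβ : β 0 = 0) :
    ∑ j : Column m, array β p q 0 j = 2 * m ^ 2 + (2 * m + 1) * β 2 := by
  have array_last : array β p q 0 (.inr (.inr ()) : Column m) = m + (2 * m + 1) * β 2 := by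
    simp [array, columnPerm, entry, residue]
  simp only [Fintype.sum_sum_type, array_zero_inl hβ, array_zero_inr_inl hβ, Fintype.sum_unique,
    array_last, ← sum_even_add_sum_odd]
  ring

theorem sum_ite_lt_neg (hp : p ≤ m) (d : ℤ) :
    ∑ k : Fin m, (if k < p then d else -d) = (2 * p - m) * d := by
  have ite_eq (k : Fin m) : (if k < p then d else -d) = (if k < p then 2 * d else 0) - d := by
    split_ifs <;> ring
  simp only [ite_eq, Finset.sum_sub_distrib, ← Finset.sum_filter, Finset.sum_const,
    Fin.card_filter_val_lt, Finset.card_univ, Fintype.card_fin, nsmul_eq_mul, min_eq_right hp]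
  ring

/-- The difference of the sums of rows `1` and `2` of `array β p q`. The first two terms are the
contributions of the columns of the first and of the second kind. -/
def rowDifference (m : ℕ) (β : Equiv.Perm (Fin 3)) (p q : ℕ) : ℤ :=
  (2 * p - m) * ((2 * m + 1) * ((β 1 : ℕ) - (β 2 : ℕ)) - m) +
    (2 * q - m) * ((2 * m + 1) * ((β 1 : ℕ) - (β 2 : ℕ)) + (m + 1)) +
    ((2 * m + 1) * (β 1 : ℕ) - 2 * m)

theorem sum_array_one_sub_sum_array_two (hβ : β 0 = 0) (hp : p ≤ m) (hq : q ≤ m) :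
    ((∑ j : Column m, array β p q 1 j : ℕ) : ℤ) - (∑ j : Column m, array β p q 2 j : ℕ) =
      rowDifference m β p q := by
  rw [rowDifference]
  set d : ℤ := (2 * m + 1) * ((β 1 : ℕ) - (β 2 : ℕ)) with hd
  have sub_first (k : Fin m) :
      (array β p q 1 (.inl k : Column m) : ℤ) - array β p q 2 (.inl k : Column m) =
        if k < p then d - m else -(d - m) := by
    have : ((2 * m - k : ℕ) : ℤ) = 2 * m - (k : ℕ) := by omega
    simp only [array, columnPerm]
    split_ifs <;> simp [entry, residue, hd] <;> linarith
  have sub_second (k : Fin m) :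
      (array β p q 1 (.inr (.inl k) : Column m) : ℤ) - array β p q 2 (.inr (.inl k) : Column m) =
        if k < q then d + (m + 1) else -(d + (m + 1)) := by
    have : ((2 * m - k : ℕ) : ℤ) - (m - 1 - k : ℕ) = m + 1 := by omega
    simp only [array, columnPerm]
    split_ifs <;> simp [entry, residue, hd] <;> linarith
  have sub_last : (array β p q 1 (.inr (.inr ()) : Column m) : ℤ) -
      array β p q 2 (.inr (.inr ()) : Column m) = (2 * m + 1) * (β 1 : ℕ) - 2 * m := by
    simp [array, columnPerm, entry, residue, hβ, Equiv.swap_apply_of_ne_of_ne]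
  push_cast
  rw [← Finset.sum_sub_distrib, Fintype.sum_sum_type, Fintype.sum_sum_type]
  simp only [sub_first, sub_second, sub_last, sum_ite_lt_neg hp, sum_ite_lt_neg hq,
    Fintype.sum_unique, add_assoc]

theorem mul_apply_two_mem_Icc (hβ : β 0 = 0) :
    (2 * m + 1) * (β 2 : ℕ) ∈ Set.Icc (2 * m + 1) (2 * (2 * m + 1)) := by
  have : β 2 ≠ 0 := hβ ▸ β.injective.ne (by decide)
  constructor <;> nlinarith [show 1 ≤ (β 2 : ℕ) ∧ (β 2 : ℕ) ≤ 2 by omega]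

theorem eq_one_or_two_mul_le_sq (m : ℕ) [NeZero m] : m = 1 ∨ 2 ≤ m ∧ 2 * m ≤ m ^ 2 := by
  rcases (NeZero.one_le (n := m)).eq_or_lt with hm | hm
  · exact .inl hm.symm
  · exact .inr ⟨hm, by nlinarith⟩

theorem sum_array_total (hβ : β 0 = 0) :
    ∑ j : Column m, array β p q 1 j + ∑ j : Column m, array β p q 2 j + (2 * m + 1) * β 2 =
      16 * m ^ 2 + 15 * m + 3 := by
  have := (isColumnMagic_array (m := m) (β := β) (p := p) (q := q)).sum_rows
  rw [Fin.sum_univ_three, sum_array_zero hβ, card_column] at this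
  linarith

theorem chiLA_column [NeZero m] (hβ : β 0 = 0) (hp : p ≤ m) (hq : q ≤ m)
    (h : rowDifference m β p q = 1) : chiLA (K12 (Column m)) = 3 := by
  have row_one : ∑ j : Column m, array β p q 1 j = ∑ j : Column m, array β p q 2 j + 1 := by
    have := sum_array_one_sub_sum_array_two hβ hp hq
    omega
  have total := sum_array_total (m := m) (p := p) (q := q) hβ
  have ⟨le_mul, mul_le⟩ := mul_apply_two_mem_Icc (m := m) hβ
  have hm := eq_one_or_two_mul_le_sq m
  refine (isColumnMagic_array.isAntimagicArray_add_three row_one rfl ?_ ?_ ?_).chiLA_eq_three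
  · rw [card_column]
    rcases hm with rfl | hm <;> omega
  · rw [card_column, sum_array_zero hβ]
    rcases hm with rfl | hm <;> omega
  · rw [sum_array_zero hβ]
    rcases hm with rfl | hm <;> omega

theorem chiLA_column_ne [NeZero m] (hβ : β 0 = 0) (hp : p ≤ m) (hq : q ≤ m)
    (h : rowDifference m β p q = 0) :
    chiLA (K12 {j : Column m // j ≠ .inl 0}) = 3 := by
  have row_one : ∑ j : Column m, array β p q 1 j = ∑ j : Column m, array β p q 2 j := by
    have := sum_array_one_sub_sum_array_two hβ hp hq
    omega
  have total := sum_array_total (m := m) (p := p) (q := q) hβ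
  have ⟨le_mul, mul_le⟩ := mul_apply_two_mem_Icc (m := m) hβ
  have hm := eq_one_or_two_mul_le_sq m
  have : Nonempty {j : Column m // j ≠ .inl 0} := ⟨.inr (.inr ()), Sum.inr_ne_inl⟩
  have rows (i : Fin 2) :
      ∑ j : Column m, array β p q i.succ j = ∑ j : Column m, array β p q 2 j := by
    fin_cases i
    exacts [row_one, rfl]
  refine IsAntimagicArray.chiLA_eq_three
    (isColumnMagic_array.isAntimagicArray_ne (array_zero_inl hβ 0) rows ?_ ?_ ?_)
  · rcases hm with rfl | hm <;> omega
  · rw [sum_array_zero hβ]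
    omega
  · rw [sum_array_zero hβ]
    rcases hm with rfl | hm <;> omega

end Rectangle

-- `rowDifference 1` has no zero, so deleting a column does not cover this case.
theorem chiLA_fin_two : chiLA (K12 (Fin 2)) = 3 :=
  IsAntimagicArray.chiLA_eq_three (M := ![![1, 5], ![3, 4], ![7, 2]]) (a := ![8, 6]) (s := 15)
    (c := 11) ⟨by decide, by decide, by decide, by decide, by decide, by decide, by decide⟩

theorem chiLA_column_two_mul_add_one (h : ℕ) : chiLA (K12 (Column (2 * h + 1))) = 3 := by
  refine chiLA_column (β := Equiv.swap 1 2) (p := h + 1) (q := h) rfl (by omega) (by omega) ?_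
  simp only [rowDifference, Equiv.swap_apply_left, Equiv.swap_apply_right, Fin.coe_ofNat_eq_mod,
    Nat.mod_succ, Nat.one_mod]
  push_cast
  ring

theorem chiLA_column_two_mul_add_two (h : ℕ) : chiLA (K12 (Column (2 * h + 2))) = 3 := by
  refine chiLA_column (β := 1) (p := h + 1) (q := h + 1) rfl (by omega) (by omega) ?_
  simp only [rowDifference, Equiv.Perm.coe_one, id_eq, Fin.coe_ofNat_eq_mod, Nat.mod_succ,
    Nat.one_mod]
  push_cast
  ring

theorem chiLA_column_ne_two_mul_add_two (h : ℕ) :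
    chiLA (K12 {j : Column (2 * h + 2) // j ≠ .inl 0}) = 3 := by
  refine chiLA_column_ne (β := Equiv.swap 1 2) (p := h) (q := h + 1) rfl (by omega) (by omega) ?_
  simp only [rowDifference, Equiv.swap_apply_left, Equiv.swap_apply_right, Fin.coe_ofNat_eq_mod,
    Nat.mod_succ, Nat.one_mod]
  push_cast
  ring

theorem chiLA_column_ne_two_mul_add_three (h : ℕ) :
    chiLA (K12 {j : Column (2 * h + 3) // j ≠ .inl 0}) = 3 := by
  refine chiLA_column_ne (β := 1) (p := h + 2) (q := h) rfl (by omega) (by omega) ?_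
  simp only [rowDifference, Equiv.Perm.coe_one, id_eq, Fin.coe_ofNat_eq_mod, Nat.mod_succ,
    Nat.one_mod]
  push_cast
  ring

end K12

theorem chiLA_K12r (r : ℕ) (hr : 2 ≤ r) :
    chiLA (SimpleGraph.completeMultipartiteGraph ![Fin 1, Fin 2, Fin r]) = 3 := by
  obtain rfl | ⟨h, rfl | rfl | rfl | rfl⟩ :
      r = 2 ∨ ∃ h, r = 4 * h + 3 ∨ r = 4 * h + 4 ∨ r = 4 * h + 5 ∨ r = 4 * h + 6 :=
    or_iff_not_imp_left.2 fun _ ↦ ⟨(r - 3) / 4, by omega⟩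
  · exact (K12.chiLA_completeMultipartite (Fintype.card_fin 2)).trans K12.chiLA_fin_two
  · exact (K12.chiLA_completeMultipartite (by rw [K12.card_column]; ring)).trans
      (K12.chiLA_column_two_mul_add_one h)
  · exact (K12.chiLA_completeMultipartite (by rw [K12.card_column_ne]; ring)).trans
      (K12.chiLA_column_ne_two_mul_add_two h)
  · exact (K12.chiLA_completeMultipartite (by rw [K12.card_column]; ring)).trans
      (K12.chiLA_column_two_mul_add_two h)
  · exact (K12.chiLA_completeMultipartite (by rw [K12.card_column_ne]; ring)).trans
      (K12.chiLA_column_ne_two_mul_add_three h)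
end

section
/- For every integer k ≥ 1, the wheel W_{4k} on 4k+1 vertices has local antimagic chromatic number exactly 3. -/
open scoped BigOperators

/-- The wheel `Wₙ`: hub `none` joined to an `n`-cycle on `some`-vertices. -/
def wheel (n : ℕ) : SimpleGraph (Option (Fin n)) :=
  SimpleGraph.fromRel (fun x y =>
    x = none ∨ ∃ a b : Fin n, x = some a ∧ y = some b ∧ (b : ℕ) = ((a : ℕ) + 1) % n)

/-!
The vertex sums of a local antimagic labeling form a proper coloring, so the triangle in a wheel
forces at least three colors.

For `k ≥ 2`, cut the rim of `W_{4k}` into `k` blocks of four edges and give the rim edges of block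
`q` the labels `2q + 1`, `3k - q`, `2q + 2`, `6k - q`. Choosing the spoke labels so that the rim
vertices alternately have sums `10k + 2` and `11k + 1`, every spoke label is affine in `q` with
slope `-1`, except at the spoke `0`, where the rim closes up. The affine spokes fill all remaining
labels but `5k`, which is exactly the label that the spoke `0` needs. For `k = 1` the two sums
coincide, and `W_4` is labeled by hand.
-/

section LocalAntimagic

variable {V : Type*} [Finite V] {G : SimpleGraph V} {f : Sym2 V → ℕ} {m : ℕ} {s : Finset V}

theorem IsLocalAntimagic.le_colorCount_of_isNClique (hf : IsLocalAntimagic G f)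
    (hs : G.IsNClique m s) : m ≤ colorCount G f := by
  have hinj : Set.InjOn (vertexSum G f) s := fun u hu v hv huv ↦
    by_contra fun hne ↦ hf.2 u v (hs.isClique hu hv hne) huv
  calc m = (vertexSum G f '' s).ncard := by
        rw [hinj.ncard_image, Set.ncard_coe_finset, hs.card_eq]
    _ ≤ colorCount G f := Set.ncard_le_ncard (Set.image_subset_range _ _) (Set.finite_range _)

theorem chiLA_eq_of_isNClique (hs : G.IsNClique m s) (hf : IsLocalAntimagic G f)
    (hcount : colorCount G f ≤ m) : chiLA G = m := by
  have hmem : m ∈ {n | ∃ g, IsLocalAntimagic G g ∧ colorCount G g = n} :=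
    ⟨f, hf, hcount.antisymm (hf.le_colorCount_of_isNClique hs)⟩
  refine (Nat.sInf_le hmem).antisymm (le_csInf ⟨m, hmem⟩ ?_)
  rintro _ ⟨g, hg, rfl⟩
  exact hg.le_colorCount_of_isNClique hs

end LocalAntimagic

section Wheel

variable {n : ℕ}

theorem wheel_adj_none_some (i : Fin n) : (wheel n).Adj none (some i) := by
  simp [wheel]

variable [NeZero n]

theorem fin_add_one_ne_self (hn : 2 ≤ n) (i : Fin n) : i + 1 ≠ i := by
  rw [Ne, add_eq_left, Fin.ext_iff, Fin.val_one', Fin.val_zero, Nat.mod_eq_of_lt hn]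
  exact one_ne_zero

theorem fin_add_one_add_one_ne_self (hn : 3 ≤ n) (i : Fin n) : i + 1 + 1 ≠ i := by
  rw [Ne, add_assoc, add_eq_left, Fin.ext_iff, Fin.val_add, Fin.val_one', Fin.val_zero,
    Nat.mod_eq_of_lt (by omega : 1 < n), Nat.mod_eq_of_lt hn]
  exact two_ne_zero

theorem wheel_adj_some_some (hn : 2 ≤ n) {i j : Fin n} :
    (wheel n).Adj (some i) (some j) ↔ j = i + 1 ∨ i = j + 1 := by
  have hsucc : ∀ a b : Fin n, (b : ℕ) = (a + 1) % n ↔ b = a + 1 := fun a b ↦ by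
    simp [Fin.ext_iff, Fin.val_add]
  have hne : j = i + 1 ∨ i = j + 1 → i ≠ j := by
    rintro (rfl | rfl)
    · exact (fin_add_one_ne_self hn i).symm
    · exact fin_add_one_ne_self hn j
  simpa [wheel, hsucc] using hne

theorem wheel_isNClique_three (hn : 2 ≤ n) :
    (wheel n).IsNClique 3 {none, some 0, some 1} := by
  rw [SimpleGraph.is3Clique_triple_iff, wheel_adj_some_some hn]
  exact ⟨wheel_adj_none_some 0, wheel_adj_none_some 1, .inl (zero_add 1).symm⟩

/-- An indexing of the edges of the wheel: `inl i` is the spoke at the rim vertex `i`, and `inr i`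
is the rim edge from `i` to `i + 1`. -/
def wheelEdge : Fin n ⊕ Fin n → Sym2 (Option (Fin n)) :=
  Sum.elim (fun i ↦ s(none, some i)) (fun i ↦ s(some i, some (i + 1)))

theorem wheelEdge_injective (hn : 3 ≤ n) : Function.Injective (wheelEdge (n := n)) := by
  refine Function.Injective.sumElim (fun i j h ↦ by simpa using h) (fun i j h ↦ ?_) (by simp)
  rcases Sym2.eq_iff.1 h with ⟨hij, -⟩ | ⟨hij, hji⟩
  · exact Option.some.inj hij
  · rw [Option.some.injEq] at hij hji
    exact absurd (hij ▸ hji) (fin_add_one_add_one_ne_self hn j)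

theorem range_wheelEdge (hn : 2 ≤ n) : Set.range (wheelEdge (n := n)) = (wheel n).edgeSet := by
  refine Set.Subset.antisymm ?_ fun e ↦ ?_
  · rintro _ ⟨i | i, rfl⟩
    · exact wheel_adj_none_some i
    · exact (wheel_adj_some_some hn).2 (.inl rfl)
  · induction e using Sym2.ind with
    | _ u v =>
      rw [SimpleGraph.mem_edgeSet]
      intro h
      match u, v with
      | none, none => exact absurd rfl h.ne
      | none, some i => exact ⟨.inl i, rfl⟩
      | some i, none => exact ⟨.inl i, Sym2.eq_swap⟩
      | some i, some j =>
        rcases (wheel_adj_some_some hn).1 h with rfl | rfl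
        · exact ⟨.inr i, rfl⟩
        · exact ⟨.inr j, Sym2.eq_swap⟩

theorem ncard_edgeSet_wheel (hn : 3 ≤ n) : (wheel n).edgeSet.ncard = 2 * n := by
  rw [← range_wheelEdge (by omega), ← Set.image_univ,
    Set.ncard_image_of_injective _ (wheelEdge_injective hn), Set.ncard_univ,
    Nat.card_sum, Nat.card_fin, two_mul]

theorem incidenceSet_wheel_none (hn : 2 ≤ n) :
    (wheel n).incidenceSet none = Set.range (wheelEdge ∘ Sum.inl) := by
  ext e
  rw [SimpleGraph.incidenceSet, ← range_wheelEdge hn]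
  constructor
  · rintro ⟨⟨i | i, rfl⟩, h⟩
    · exact ⟨i, rfl⟩
    · simp [wheelEdge] at h
  · rintro ⟨i, rfl⟩
    exact ⟨⟨_, rfl⟩, Sym2.mem_mk_left _ _⟩

theorem incidenceSet_wheel_some (hn : 2 ≤ n) (i : Fin n) :
    (wheel n).incidenceSet (some i) = wheelEdge '' {.inl i, .inr i, .inr (i - 1)} := by
  ext e
  rw [SimpleGraph.incidenceSet, ← range_wheelEdge hn]
  constructor
  · rintro ⟨⟨j, rfl⟩, h⟩
    refine ⟨j, ?_, rfl⟩
    rcases j with j | j <;> simpa [wheelEdge, eq_comm (a := i), eq_sub_iff_add_eq] using h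
  · rintro ⟨j, rfl | rfl | rfl, rfl⟩ <;> exact ⟨⟨_, rfl⟩, by simp [wheelEdge]⟩

theorem vertexSum_wheel_none (hn : 2 ≤ n) (f : Sym2 (Option (Fin n)) → ℕ) :
    vertexSum (wheel n) f none = ∑ i, f (wheelEdge (.inl i)) := by
  have hinj : Function.Injective (wheelEdge ∘ Sum.inl (α := Fin n)) := fun i j h ↦ by
    simpa [wheelEdge] using h
  rw [vertexSum, incidenceSet_wheel_none hn, finsum_mem_range hinj, finsum_eq_sum_of_fintype]
  rfl

theorem vertexSum_wheel_some (hn : 3 ≤ n) (f : Sym2 (Option (Fin n)) → ℕ) (i : Fin n) :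
    vertexSum (wheel n) f (some i) =
      f (wheelEdge (.inl i)) + f (wheelEdge (.inr i)) + f (wheelEdge (.inr (i - 1))) := by
  have hne : i ≠ i - 1 := fun h ↦
    fin_add_one_ne_self (by omega) i (eq_sub_iff_add_eq.1 h)
  rw [vertexSum, incidenceSet_wheel_some (by omega),
    finsum_mem_image (wheelEdge_injective hn).injOn,
    finsum_mem_insert _ (by simp) (Set.toFinite _), finsum_mem_pair (by simpa using hne), add_assoc]

/-- The edge labeling of the wheel with label `spoke i` on the spoke at the rim vertex `i` and label
`rim i` on the rim edge from `i` to `i + 1`; pairs that are not edges get the label `0`. -/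
noncomputable def wheelLabeling (spoke rim : Fin n → ℕ) : Sym2 (Option (Fin n)) → ℕ :=
  Function.extend wheelEdge (Sum.elim spoke rim) 0

theorem wheelLabeling_wheelEdge (hn : 3 ≤ n) (spoke rim : Fin n → ℕ) (e : Fin n ⊕ Fin n) :
    wheelLabeling spoke rim (wheelEdge e) = Sum.elim spoke rim e :=
  (wheelEdge_injective hn).extend_apply _ _ _

theorem vertexSum_wheelLabeling_none (hn : 3 ≤ n) (spoke rim : Fin n → ℕ) :
    vertexSum (wheel n) (wheelLabeling spoke rim) none = ∑ i, spoke i := by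
  simp only [vertexSum_wheel_none (by omega : 2 ≤ n), wheelLabeling_wheelEdge hn, Sum.elim_inl]

theorem vertexSum_wheelLabeling_some (hn : 3 ≤ n) (spoke rim : Fin n → ℕ) (i : Fin n) :
    vertexSum (wheel n) (wheelLabeling spoke rim) (some i) = spoke i + rim i + rim (i - 1) := by
  simp only [vertexSum_wheel_some hn, wheelLabeling_wheelEdge hn, Sum.elim_inl, Sum.elim_inr]

theorem bijOn_wheelLabeling (hn : 3 ≤ n) {spoke rim : Fin n → ℕ}
    (hmem : ∀ e, Sum.elim spoke rim e ∈ Set.Icc 1 (2 * n))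
    (hinj : Function.Injective (Sum.elim spoke rim)) :
    Set.BijOn (wheelLabeling spoke rim) (wheel n).edgeSet
      (Set.Icc 1 (wheel n).edgeSet.ncard) := by
  have hmaps : Set.MapsTo (wheelLabeling spoke rim) (wheel n).edgeSet (Set.Icc 1 (2 * n)) := by
    rw [← range_wheelEdge (by omega), Set.mapsTo_range_iff]
    exact fun e ↦ wheelLabeling_wheelEdge hn spoke rim e ▸ hmem e
  have hinjOn : Set.InjOn (wheelLabeling spoke rim) (wheel n).edgeSet := by
    rw [← range_wheelEdge (by omega)]
    rintro _ ⟨d, rfl⟩ _ ⟨e, rfl⟩ h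
    rw [wheelLabeling_wheelEdge hn, wheelLabeling_wheelEdge hn] at h
    rw [hinj h]
  have hcard : (Set.Icc 1 (2 * n)).ncard ≤
      (wheelLabeling spoke rim '' (wheel n).edgeSet).ncard := by
    rw [hinjOn.ncard_image, ncard_edgeSet_wheel hn, ← Finset.coe_Icc, Set.ncard_coe_finset,
      Nat.card_Icc, add_tsub_cancel_right]
  rw [ncard_edgeSet_wheel hn]
  exact ⟨hmaps, hinjOn, (Set.eq_of_subset_of_ncard_le hmaps.image_subset hcard).ge⟩

theorem isLocalAntimagic_wheelLabeling (hn : 3 ≤ n) {spoke rim : Fin n → ℕ}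
    (hmem : ∀ e, Sum.elim spoke rim e ∈ Set.Icc 1 (2 * n))
    (hinj : Function.Injective (Sum.elim spoke rim))
    (hrim : ∀ i, spoke i + rim i + rim (i - 1) ≠ spoke (i + 1) + rim (i + 1) + rim i)
    (hhub : ∀ i, ∑ j, spoke j ≠ spoke i + rim i + rim (i - 1)) :
    IsLocalAntimagic (wheel n) (wheelLabeling spoke rim) := by
  refine ⟨bijOn_wheelLabeling hn hmem hinj, fun u v h ↦ ?_⟩
  match u, v with
  | none, none => exact absurd rfl h.ne
  | none, some i =>
    simpa only [vertexSum_wheelLabeling_none hn, vertexSum_wheelLabeling_some hn] using hhub i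
  | some i, none =>
    simpa only [vertexSum_wheelLabeling_none hn, vertexSum_wheelLabeling_some hn]
      using (hhub i).symm
  | some i, some j =>
    simp only [vertexSum_wheelLabeling_some hn]
    rcases (wheel_adj_some_some (by omega)).1 h with rfl | rfl
    · simpa only [add_sub_cancel_right] using hrim i
    · simpa only [add_sub_cancel_right] using (hrim j).symm

theorem colorCount_wheelLabeling_le_three (hn : 3 ≤ n) {spoke rim : Fin n → ℕ} {a b : ℕ}
    (hsum : ∀ i, spoke i + rim i + rim (i - 1) = a ∨ spoke i + rim i + rim (i - 1) = b) :
    colorCount (wheel n) (wheelLabeling spoke rim) ≤ 3 := by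
  have hsub : Set.range (vertexSum (wheel n) (wheelLabeling spoke rim)) ⊆
      ({∑ i, spoke i, a, b} : Finset ℕ) := by
    rintro _ ⟨_ | i, rfl⟩
    · simp [vertexSum_wheelLabeling_none hn]
    · simpa [vertexSum_wheelLabeling_some hn] using Or.inr (hsum i)
  calc colorCount (wheel n) (wheelLabeling spoke rim)
      ≤ (({∑ i, spoke i, a, b} : Finset ℕ) : Set ℕ).ncard :=
        Set.ncard_le_ncard hsub (Finset.finite_toSet _)
    _ ≤ 3 := by
        rw [Set.ncard_coe_finset]
        exact Finset.card_le_three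

theorem fin_even_val_add_one (hn : Even n) (i : Fin n) : Even (i + 1).val ↔ ¬Even i.val := by
  rw [Fin.val_add, Fin.val_one', Nat.add_mod_mod, ← Nat.even_add_one, hn.mod_even_iff]

theorem chiLA_wheel_eq_three (hn : 3 ≤ n) (heven : Even n) {spoke rim : Fin n → ℕ} {a b : ℕ}
    (hmem : ∀ e, Sum.elim spoke rim e ∈ Set.Icc 1 (2 * n))
    (hinj : Function.Injective (Sum.elim spoke rim))
    (hsum : ∀ i, spoke i + rim i + rim (i - 1) = if Even i.val then a else b) (hab : a ≠ b)
    (ha : ∑ i, spoke i ≠ a) (hb : ∑ i, spoke i ≠ b) : chiLA (wheel n) = 3 := by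
  have hrim (i : Fin n) :
      spoke i + rim i + rim (i - 1) ≠ spoke (i + 1) + rim (i + 1) + rim i := by
    have hnext := hsum (i + 1)
    rw [add_sub_cancel_right] at hnext
    rw [hsum, hnext, ite_cond_congr (propext (fin_even_val_add_one heven i)), ite_not]
    split_ifs
    exacts [hab, hab.symm]
  have hhub (i : Fin n) : ∑ j, spoke j ≠ spoke i + rim i + rim (i - 1) := by
    rw [hsum]
    split_ifs <;> assumption
  exact chiLA_eq_of_isNClique (wheel_isNClique_three (by omega))
    (isLocalAntimagic_wheelLabeling hn hmem hinj hrim hhub)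
    (colorCount_wheelLabeling_le_three hn fun i ↦ hsum i ▸ ite_eq_or_eq _ _ _)

end Wheel

theorem chiLA_wheel_four : chiLA (wheel 4) = 3 :=
  chiLA_wheel_eq_three (spoke := ![6, 5, 8, 1]) (rim := ![2, 4, 3, 7]) (a := 15) (b := 11)
    (by decide) (by decide) (by decide) (by decide) (by decide) (by decide) (by decide) (by decide)

section BlockLabels

/-- The label of the rim edge from `i` to `i + 1` in the labeling of `W_{4k}` for `k ≥ 2`. -/
def rimLabel (k i : ℕ) : ℕ :=
  if i % 2 = 0 then i / 2 + 1
  else if i % 4 = 1 then 3 * k - i / 4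
  else 6 * k - i / 4

/-- The label of the spoke at the rim vertex `i` in the labeling of `W_{4k}` for `k ≥ 2`. -/
def spokeLabel (k i : ℕ) : ℕ :=
  if i = 0 then 5 * k
  else if i % 4 = 0 then 4 * k - i / 4
  else if i % 4 = 1 then 8 * k - i / 4
  else if i % 4 = 2 then 7 * k - i / 4
  else 5 * k - 1 - i / 4

variable {k i j : ℕ}

theorem rimLabel_mem_Icc (hi : i < 4 * k) : rimLabel k i ∈ Set.Icc 1 (6 * k) := by
  rw [Set.mem_Icc, rimLabel]
  split_ifs <;> omega

theorem spokeLabel_mem_Icc (hi : i < 4 * k) : spokeLabel k i ∈ Set.Icc (3 * k + 1) (8 * k) := by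
  rw [Set.mem_Icc, spokeLabel]
  split_ifs <;> omega

theorem rimLabel_injOn : Set.InjOn (rimLabel k) (Set.Iio (4 * k)) := by
  intro i hi j hj
  rw [Set.mem_Iio] at hi hj
  unfold rimLabel
  split_ifs <;> omega

theorem spokeLabel_injOn : Set.InjOn (spokeLabel k) (Set.Iio (4 * k)) := by
  intro i hi j hj
  rw [Set.mem_Iio] at hi hj
  unfold spokeLabel
  split_ifs <;> omega

theorem spokeLabel_ne_rimLabel (hi : i < 4 * k) (hj : j < 4 * k) :
    spokeLabel k i ≠ rimLabel k j := by
  unfold spokeLabel rimLabel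
  split_ifs <;> omega

theorem spokeLabel_add_rimLabel_zero (hk : 0 < k) :
    spokeLabel k 0 + rimLabel k 0 + rimLabel k (4 * k - 1) = 10 * k + 2 := by
  unfold spokeLabel rimLabel
  split_ifs <;> omega

theorem spokeLabel_add_rimLabel_succ (hi : i + 1 < 4 * k) :
    spokeLabel k (i + 1) + rimLabel k (i + 1) + rimLabel k i =
      if Even (i + 1) then 10 * k + 2 else 11 * k + 1 := by
  rw [spokeLabel, if_neg i.succ_ne_zero]
  simp only [rimLabel, Nat.even_iff]
  split_ifs <;> omega

theorem spokeLabel_add_rimLabel_fin [NeZero (4 * k)] (i : Fin (4 * k)) :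
    spokeLabel k i + rimLabel k i + rimLabel k (i - 1 : Fin (4 * k)) =
      if Even i.val then 10 * k + 2 else 11 * k + 1 := by
  have hk : 0 < 4 * k := i.pos
  rcases eq_or_ne i 0 with rfl | hi
  · have hlast : (0 - 1 : Fin (4 * k)).val = 4 * k - 1 := by
      simp [Fin.val_neg, Nat.mod_eq_of_lt (by omega : 1 < 4 * k)]
    rw [hlast, Fin.val_zero, if_pos Even.zero]
    exact spokeLabel_add_rimLabel_zero (by omega)
  · have hpred : (i - 1).val + 1 = i.val := by
      rw [Fin.val_sub_one_of_ne_zero hi, Nat.sub_one_add_one (Fin.val_ne_zero_iff.2 hi)]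
    have hsum := spokeLabel_add_rimLabel_succ (hpred.trans_lt i.isLt)
    rwa [hpred] at hsum

theorem lt_sum_spokeLabel (hk : 2 ≤ k) : 11 * k + 1 < ∑ i : Fin (4 * k), spokeLabel k i :=
  calc 11 * k + 1 < 4 * k * (3 * k + 1) := by nlinarith
    _ ≤ ∑ i : Fin (4 * k), spokeLabel k i := by
      simpa using Finset.card_nsmul_le_sum Finset.univ (fun i : Fin (4 * k) ↦ spokeLabel k i) _
        fun i _ ↦ (spokeLabel_mem_Icc i.isLt).1

theorem chiLA_wheel_four_mul_of_two_le (hk : 2 ≤ k) : chiLA (wheel (4 * k)) = 3 := by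
  have : NeZero (4 * k) := ⟨by omega⟩
  have hspoke : Function.Injective fun i : Fin (4 * k) ↦ spokeLabel k i := fun i j h ↦
    Fin.ext (spokeLabel_injOn i.isLt j.isLt h)
  have hrim : Function.Injective fun i : Fin (4 * k) ↦ rimLabel k i := fun i j h ↦
    Fin.ext (rimLabel_injOn i.isLt j.isLt h)
  have hhub := lt_sum_spokeLabel hk
  refine chiLA_wheel_eq_three (by omega) ⟨2 * k, by ring⟩ ?_
    (hspoke.sumElim hrim fun i j ↦ spokeLabel_ne_rimLabel i.isLt j.isLt)
    spokeLabel_add_rimLabel_fin (by omega) (by omega) (by omega)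
  rintro (i | i)
  · exact Set.Icc_subset_Icc (by omega) (by omega) (spokeLabel_mem_Icc i.isLt)
  · exact Set.Icc_subset_Icc le_rfl (by omega) (rimLabel_mem_Icc i.isLt)

end BlockLabels

theorem chiLA_wheel_4k (k : ℕ) (hk : 1 ≤ k) : chiLA (wheel (4 * k)) = 3 := by
  obtain rfl | hk := hk.eq_or_lt
  · exact chiLA_wheel_four
  · exact chiLA_wheel_four_mul_of_two_le hk
end
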